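/- Let f(x) = F₁(x') + ωF₂(x') with f ∈ GS²(Ω_D) ∩ C²(Ω_D, 𝔸). Then for all x ∈ Ω_D: Δ_x f(x) = Δ_{x'}F₁(x') + ω Δ_{x'}F₂(x') + (q−1)((1/r)∂_r F₁(x') + ω ∂_r(F₂(x')/r)), where Δ_{x'} = Δ_{x_p} + ∂_r² is the Laplacian on ℝ^{p+2}, and at points with r = 0 the quantities (1/r)∂_r F₁ and ∂_r(F₂/r) are understood as limits as r → 0, which exist and equal ∂_r²F₁(x_p, 0) and (1/2)∂_r²F₂(x_p, 0) respectively. -/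

import Mathlib

open scoped BigOperators
open Filter Topology

namespace GPSM

variable (A : Type*) [NormedAddCommGroup A] [NormedSpace ℝ A] [Mul A] [One A]

/-- `A` is a real alternative algebra with unit `1`, of finite dimension `d > 1`,
equipped with an anti-involution `conj` (a real-linear map with `(a^c)^c = a`,
`(ab)^c = b^c a^c`, fixing the reals).  The associator is alternating (left/right
alternative laws). -/
structure IsAltStarAlg (conj : A → A) : Prop where
  finDim : FiniteDimensional ℝ A
  one_lt_finrank : 1 < Module.finrank ℝ A
  mul_add' : ∀ a b c : A, a * (b + c) = a * b + a * c
  add_mul' : ∀ a b c : A, (a + b) * c = a * c + b * c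
  smul_mul' : ∀ (r : ℝ) (a b : A), (r • a) * b = r • (a * b)
  mul_smul' : ∀ (r : ℝ) (a b : A), a * (r • b) = r • (a * b)
  one_mul' : ∀ a : A, 1 * a = a
  mul_one' : ∀ a : A, a * 1 = a
  alt_left : ∀ a b : A, a * (a * b) = a * a * b
  alt_right : ∀ a b : A, a * b * b = a * (b * b)
  conj_add : ∀ a b : A, conj (a + b) = conj a + conj b
  conj_smul : ∀ (r : ℝ) (a : A), conj (r • a) = r • conj a
  conj_conj : ∀ a : A, conj (conj a) = a
  conj_mul : ∀ a b : A, conj (a * b) = conj b * conj a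
  conj_one : conj 1 = 1

/-- `v 0, v 1, …, v m` is a hypercomplex basis of the hypercomplex subspace
`M = span(v 0, …, v m)` of `A`: `v 0 = 1`, `t(v s) = 0`, `n(v s) = 1`, the `v s`
anticommute for distinct `s, t ∈ {1,…,m}`, they are linearly independent, and
`M` is contained in the quadratic cone `Q_A`. -/
structure IsHypBasis (conj : A → A) (v : ℕ → A) (m : ℕ) : Prop where
  v_zero : v 0 = 1
  trace_zero : ∀ s, 1 ≤ s → s ≤ m → v s + conj (v s) = 0
  norm_one : ∀ s, 1 ≤ s → s ≤ m → v s * conj (v s) = 1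
  anticomm : ∀ s t, 1 ≤ s → s ≤ m → 1 ≤ t → t ≤ m → s ≠ t → v s * v t = -(v t * v s)
  indep : LinearIndependent ℝ (fun i : Fin (m + 1) => v i)
  mem_cone : ∀ x ∈ Submodule.span ℝ (Set.range fun i : Fin (m + 1) => v (i : ℕ)),
      ∃ tr nr : ℝ, x + conj x = tr • (1 : A) ∧ x * conj x = nr • (1 : A) ∧
        ((∃ r : ℝ, x = r • (1 : A)) ∨ tr ^ 2 < 4 * nr)

variable {A}

/-- Identification of `ℝ^{m+1}` with the hypercomplex subspace `M`:
`(x_0,…,x_m) ↦ Σ x_s • v s`. -/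
def emb (v : ℕ → A) (m : ℕ) (x : Fin (m + 1) → ℝ) : A :=
  ∑ s : Fin (m + 1), x s • v (s : ℕ)

/-- First `p+1` coordinates of a point of `M ≅ ℝ^{m+1}`, i.e. the `x_p`-part. -/
def projP (m p : ℕ) (x : Fin (m + 1) → ℝ) : Fin (p + 1) → ℝ := fun s =>
  if h : (s : ℕ) < m + 1 then x ⟨(s : ℕ), h⟩ else 0

/-- Inclusion `ℝ^{p+1} ⊆ ℝ^{m+1}` (remaining coordinates `0`). -/
def injP (m p : ℕ) (y : Fin (p + 1) → ℝ) : Fin (m + 1) → ℝ := fun s =>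
  if h : (s : ℕ) < p + 1 then y ⟨(s : ℕ), h⟩ else 0

/-- The coordinates of `x_q` (last `q = m - p` coordinates of `x`). -/
def xqpart (m p : ℕ) (x : Fin (m + 1) → ℝ) : Fin (m + 1) → ℝ := fun s =>
  if (s : ℕ) ≤ p then 0 else x s

/-- The coordinates of `x_p` inside `ℝ^{m+1}`. -/
def xppart (m p : ℕ) (x : Fin (m + 1) → ℝ) : Fin (m + 1) → ℝ := fun s =>
  if (s : ℕ) ≤ p then x s else 0

/-- `r = |x_q|`. -/
noncomputable def rad (m p : ℕ) (x : Fin (m + 1) → ℝ) : ℝ :=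
  Real.sqrt (∑ s : Fin (m + 1), (xqpart m p x s) ^ 2)

/-- `ω = x_q / |x_q|` (coordinates), `0` when `x_q = 0`. -/
noncomputable def normq (m p : ℕ) (x : Fin (m + 1) → ℝ) : Fin (m + 1) → ℝ :=
  (rad m p x)⁻¹ • xqpart m p x

/-- The reflection `x = x_p + x_q ↦ x_⋄ = x_p - x_q`. -/
def reflP (m p : ℕ) (x : Fin (m + 1) → ℝ) : Fin (m + 1) → ℝ := fun s =>
  if (s : ℕ) ≤ p then x s else -x s

/-- The sphere `𝕊 = {x_q ∈ span(v_{p+1},…,v_m) : x_q² = -1}`, in coordinates. -/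
def Sph (v : ℕ → A) (m p : ℕ) : Set (Fin (m + 1) → ℝ) :=
  {w | (∀ s : Fin (m + 1), (s : ℕ) ≤ p → w s = 0) ∧ emb v m w * emb v m w = -1}

/-- The point `x_p + r ω` of `M ≅ ℝ^{m+1}`. -/
def pt (m p : ℕ) (w : Fin (m + 1) → ℝ) (y : Fin (p + 1) → ℝ) (r : ℝ) :
    Fin (m + 1) → ℝ :=
  injP m p y + r • w

/-- The slice `Ω_ω ⊆ ℝ^{p+2}` of `Ω` at `ω`. -/
def sliceSet (m p : ℕ) (Ω : Set (Fin (m + 1) → ℝ)) (w : Fin (m + 1) → ℝ) :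
    Set ((Fin (p + 1) → ℝ) × ℝ) := {z | pt m p w z.1 z.2 ∈ Ω}

/-- The restriction `f_ω` of `f` to the slice at `ω`, as a function on `ℝ^{p+2}`. -/
def sliceFun (m p : ℕ) (f : (Fin (m + 1) → ℝ) → A) (w : Fin (m + 1) → ℝ) :
    (Fin (p + 1) → ℝ) × ℝ → A := fun z => f (pt m p w z.1 z.2)

/-- Partial derivative `∂_{x_s}` of a function on `ℝ^{m+1}`. -/
noncomputable def pdF (m : ℕ) (s : Fin (m + 1)) (f : (Fin (m + 1) → ℝ) → A)
    (x : Fin (m + 1) → ℝ) : A := fderiv ℝ f x (Pi.single s 1)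

/-- Partial derivative `∂_{x_s}` of a function on `ℝ^{p+1}`. -/
noncomputable def pdP (p : ℕ) (s : Fin (p + 1)) (g : (Fin (p + 1) → ℝ) → A)
    (y : Fin (p + 1) → ℝ) : A := fderiv ℝ g y (Pi.single s 1)

/-- Partial derivative `∂_{x_s}` of a function on `ℝ^{p+2} = ℝ^{p+1} × ℝ`. -/
noncomputable def pdSx (p : ℕ) (s : Fin (p + 1)) (G : (Fin (p + 1) → ℝ) × ℝ → A)
    (z : (Fin (p + 1) → ℝ) × ℝ) : A := fderiv ℝ G z (Pi.single s 1, 0)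

/-- Partial derivative `∂_r` of a function on `ℝ^{p+2} = ℝ^{p+1} × ℝ`. -/
noncomputable def pdSr (p : ℕ) (G : (Fin (p + 1) → ℝ) × ℝ → A)
    (z : (Fin (p + 1) → ℝ) × ℝ) : A := fderiv ℝ G z (0, 1)

/-- Second partial derivative `∂_r²`. -/
noncomputable def pdSr2 (p : ℕ) (G : (Fin (p + 1) → ℝ) × ℝ → A)
    (z : (Fin (p + 1) → ℝ) × ℝ) : A := pdSr p (pdSr p G) z

/-- The operator `Σ_{lo ≤ s ≤ hi} v_s ∂_{x_s}` on functions on `ℝ^{m+1}`.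
`Dop v m 0 p` is `D_{x_p}`, `Dop v m (p+1) m` is `D_{x_q}`, `Dop v m 0 m` is `D_x`. -/
noncomputable def Dop (v : ℕ → A) (m lo hi : ℕ) (f : (Fin (m + 1) → ℝ) → A)
    (x : Fin (m + 1) → ℝ) : A :=
  ∑ s : Fin (m + 1), if lo ≤ (s : ℕ) ∧ (s : ℕ) ≤ hi then v (s : ℕ) * pdF m s f x else 0

/-- The conjugate operator `∂_{x_0} - Σ_{1 ≤ s ≤ hi} v_s ∂_{x_s}` on functions on
`ℝ^{m+1}`; `Dbarop v m p` is `D̄_{x_p}`, `Dbarop v m m` is `D̄_x`. -/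
noncomputable def Dbarop (v : ℕ → A) (m hi : ℕ) (f : (Fin (m + 1) → ℝ) → A)
    (x : Fin (m + 1) → ℝ) : A :=
  pdF m 0 f x -
    ∑ s : Fin (m + 1), if 1 ≤ (s : ℕ) ∧ (s : ℕ) ≤ hi then v (s : ℕ) * pdF m s f x else 0

/-- The operator `D_{x_p} = Σ_{s=0}^p v_s ∂_{x_s}` on functions on `ℝ^{p+1}`. -/
noncomputable def DopP (v : ℕ → A) (p : ℕ) (g : (Fin (p + 1) → ℝ) → A)
    (y : Fin (p + 1) → ℝ) : A :=
  ∑ s : Fin (p + 1), v (s : ℕ) * pdP p s g y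

/-- The operator `D̄_{x_p} = ∂_{x_0} - Σ_{s=1}^p v_s ∂_{x_s}` on functions on `ℝ^{p+1}`. -/
noncomputable def DbaropP (v : ℕ → A) (p : ℕ) (g : (Fin (p + 1) → ℝ) → A)
    (y : Fin (p + 1) → ℝ) : A :=
  pdP p 0 g y - ∑ s : Fin (p + 1), if 1 ≤ (s : ℕ) then v (s : ℕ) * pdP p s g y else 0

/-- The operator `D_{x_p}` on functions on `ℝ^{p+2} = ℝ^{p+1} × ℝ`. -/
noncomputable def DopSx (v : ℕ → A) (p : ℕ) (G : (Fin (p + 1) → ℝ) × ℝ → A)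
    (z : (Fin (p + 1) → ℝ) × ℝ) : A :=
  ∑ s : Fin (p + 1), v (s : ℕ) * pdSx p s G z

/-- The operator `D̄_{x_p}` on functions on `ℝ^{p+2} = ℝ^{p+1} × ℝ`. -/
noncomputable def DbaropSx (v : ℕ → A) (p : ℕ) (G : (Fin (p + 1) → ℝ) × ℝ → A)
    (z : (Fin (p + 1) → ℝ) × ℝ) : A :=
  pdSx p 0 G z - ∑ s : Fin (p + 1), if 1 ≤ (s : ℕ) then v (s : ℕ) * pdSx p s G z else 0

/-- The Laplacian `Δ_x` on functions on `ℝ^{m+1}`. -/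
noncomputable def lapF (m : ℕ) (f : (Fin (m + 1) → ℝ) → A)
    (x : Fin (m + 1) → ℝ) : A :=
  ∑ s : Fin (m + 1), pdF m s (pdF m s f) x

/-- The Laplacian `Δ_{x_p}` on functions on `ℝ^{p+1}`. -/
noncomputable def lapP (p : ℕ) (g : (Fin (p + 1) → ℝ) → A)
    (y : Fin (p + 1) → ℝ) : A :=
  ∑ s : Fin (p + 1), pdP p s (pdP p s g) y

/-- Iterated Laplacian `Δ_x^k`. -/
noncomputable def lapIterF (m k : ℕ) (f : (Fin (m + 1) → ℝ) → A) :
    (Fin (m + 1) → ℝ) → A :=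
  (fun g => lapF m g)^[k] f

/-- Iterated Laplacian `Δ_{x_p}^k`. -/
noncomputable def lapIterP (p k : ℕ) (g : (Fin (p + 1) → ℝ) → A) :
    (Fin (p + 1) → ℝ) → A :=
  (fun h => lapP p h)^[k] g

/-- The Laplacian `Δ_{x'} = Δ_{x_p} + ∂_r²` on functions on `ℝ^{p+2}`. -/
noncomputable def lapSx (p : ℕ) (G : (Fin (p + 1) → ℝ) × ℝ → A)
    (z : (Fin (p + 1) → ℝ) × ℝ) : A :=
  (∑ s : Fin (p + 1), pdSx p s (pdSx p s G) z) + pdSr2 p G z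

/-- The slice Cauchy-Riemann operator `D_ω = D_{x_p} + ω ∂_r` applied to a function
on `ℝ^{p+2}`, where `ω` is given in coordinates by `w`. -/
noncomputable def DomCR (v : ℕ → A) (m p : ℕ) (w : Fin (m + 1) → ℝ)
    (G : (Fin (p + 1) → ℝ) × ℝ → A) (z : (Fin (p + 1) → ℝ) × ℝ) : A :=
  DopSx v p G z + emb v m w * pdSr p G z

/-- `f` is left generalized partial-slice monogenic (of type `(p, m-p)`) on `Ω`. -/
def GSM (v : ℕ → A) (m p : ℕ) (f : (Fin (m + 1) → ℝ) → A)
    (Ω : Set (Fin (m + 1) → ℝ)) : Prop :=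
  ∀ w ∈ Sph v m p, ContDiffOn ℝ 1 (sliceFun m p f w) (sliceSet m p Ω w) ∧
    ∀ z ∈ sliceSet m p Ω w, DomCR v m p w (sliceFun m p f w) z = 0

/-- `Ω` is partially symmetric with respect to `ℝ^{p+1}`. -/
def PSym (v : ℕ → A) (m p : ℕ) (Ω : Set (Fin (m + 1) → ℝ)) : Prop :=
  ∀ x ∈ Ω, ∀ w ∈ Sph v m p, xppart m p x + rad m p x • w ∈ Ω

/-- `Ω` is a slice domain: a domain meeting `ℝ^{p+1}` all of whose slices are
domains in `ℝ^{p+2}`. -/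
def SliceDomain (v : ℕ → A) (m p : ℕ) (Ω : Set (Fin (m + 1) → ℝ)) : Prop :=
  IsOpen Ω ∧ IsConnected Ω ∧ (∃ x ∈ Ω, xqpart m p x = 0) ∧
    ∀ w ∈ Sph v m p, IsConnected (sliceSet m p Ω w)

/-- The reflection `(x_p, r) ↦ (x_p, -r)` of `ℝ^{p+2}`. -/
def reflD (p : ℕ) (z : (Fin (p + 1) → ℝ) × ℝ) : (Fin (p + 1) → ℝ) × ℝ := (z.1, -z.2)

/-- The p-symmetric completion `Ω_D ⊆ M` of `D ⊆ ℝ^{p+2}`. -/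
def OmegaD (v : ℕ → A) (m p : ℕ) (D : Set ((Fin (p + 1) → ℝ) × ℝ)) :
    Set (Fin (m + 1) → ℝ) :=
  {x | ∃ w ∈ Sph v m p, ∃ z ∈ D, x = pt m p w z.1 z.2}

/-- `(F₁, F₂)` satisfies the even-odd (stem function) conditions on `D`. -/
def IsStem (p : ℕ) (D : Set ((Fin (p + 1) → ℝ) × ℝ))
    (F₁ F₂ : (Fin (p + 1) → ℝ) × ℝ → A) : Prop :=
  ∀ z ∈ D, F₁ (reflD p z) = F₁ z ∧ F₂ (reflD p z) = -F₂ z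

/-- `f` is the generalized partial-slice function induced by the stem `(F₁, F₂)`:
`f(x_p + rω) = F₁(x_p, r) + ω F₂(x_p, r)`. -/
def Induced (v : ℕ → A) (m p : ℕ) (D : Set ((Fin (p + 1) → ℝ) × ℝ))
    (F₁ F₂ : (Fin (p + 1) → ℝ) × ℝ → A) (f : (Fin (m + 1) → ℝ) → A) : Prop :=
  ∀ w ∈ Sph v m p, ∀ z ∈ D, f (pt m p w z.1 z.2) = F₁ z + emb v m w * F₂ z

/-- The generalized Cauchy-Riemann system for the stem `(F₁, F₂)` on `D`. -/
def StemCR (v : ℕ → A) (p : ℕ) (D : Set ((Fin (p + 1) → ℝ) × ℝ))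
    (F₁ F₂ : (Fin (p + 1) → ℝ) × ℝ → A) : Prop :=
  ∀ z ∈ D, DopSx v p F₁ z - pdSr p F₂ z = 0 ∧ DbaropSx v p F₂ z + pdSr p F₁ z = 0

/-- `f` is generalized partial-slice regular on `Ω_D`. -/
def MemGSR (v : ℕ → A) (m p : ℕ) (D : Set ((Fin (p + 1) → ℝ) × ℝ))
    (f : (Fin (m + 1) → ℝ) → A) : Prop :=
  ∃ F₁ F₂ : (Fin (p + 1) → ℝ) × ℝ → A, IsStem p D F₁ F₂ ∧
    ContDiffOn ℝ 1 F₁ D ∧ ContDiffOn ℝ 1 F₂ D ∧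
    Induced v m p D F₁ F₂ f ∧ StemCR v p D F₁ F₂

/-- `f` is a generalized partial-slice function on `Ω`. -/
def MemGS (v : ℕ → A) (m p : ℕ) (Ω : Set (Fin (m + 1) → ℝ))
    (f : (Fin (m + 1) → ℝ) → A) : Prop :=
  ∃ F₁ F₂ : (Fin (p + 1) → ℝ) × ℝ → A,
    (∀ z : (Fin (p + 1) → ℝ) × ℝ, F₁ (reflD p z) = F₁ z ∧ F₂ (reflD p z) = -F₂ z) ∧
    ∀ x ∈ Ω, f x = F₁ (projP m p x, rad m p x) +
      emb v m (normq m p x) * F₂ (projP m p x, rad m p x)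

/-- Non-associative power: `a^n` with products taken from the right. -/
def apow (a : A) (n : ℕ) : A := (fun b => a * b)^[n] 1

/-- Partial even part `PE[f](x) = (f(x) + f(x_⋄))/2`. -/
noncomputable def PE (m p : ℕ) (f : (Fin (m + 1) → ℝ) → A)
    (x : Fin (m + 1) → ℝ) : A := (2 : ℝ)⁻¹ • (f x + f (reflP m p x))

/-- Partial odd part `PO[f](x) = (f(x) - f(x_⋄))/2`. -/
noncomputable def PO (m p : ℕ) (f : (Fin (m + 1) → ℝ) → A)
    (x : Fin (m + 1) → ℝ) : A := (2 : ℝ)⁻¹ • (f x - f (reflP m p x))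

/-- `Ω₀* = {x_p + x_q : x_p ∈ Ω₀, x_q ∈ ℝ^q}`. -/
def Omega0star (m p : ℕ) (Ω₀ : Set (Fin (p + 1) → ℝ)) : Set (Fin (m + 1) → ℝ) :=
  {x | projP m p x ∈ Ω₀}

/-- The spherical derivative `f'_s(x) = (1/2) x_q⁻¹ (f(x) - f(x_⋄))`
(using `x_q⁻¹ = -x_q/|x_q|²`). -/
noncomputable def sder (v : ℕ → A) (m p : ℕ) (f : (Fin (m + 1) → ℝ) → A)
    (x : Fin (m + 1) → ℝ) : A :=
  -(((2 : ℝ) * rad m p x ^ 2)⁻¹) • (emb v m (xqpart m p x) * (f x - f (reflP m p x)))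

/-- The spherical Dirac operator
`Γ f = -(1/2) Σ_{p+1 ≤ i,j ≤ m} v_i (v_j (L_{ij} f))`. -/
noncomputable def sphericalGamma (v : ℕ → A) (m p : ℕ) (f : (Fin (m + 1) → ℝ) → A)
    (x : Fin (m + 1) → ℝ) : A :=
  -((2 : ℝ)⁻¹) • ∑ i : Fin (m + 1), ∑ j : Fin (m + 1),
    if p < (i : ℕ) ∧ p < (j : ℕ) then
      v (i : ℕ) * (v (j : ℕ) * (x i • pdF m j f x - x j • pdF m i f x)) else 0

/-- The slice Cauchy-Riemann operator `D_ω` applied to (the slice restriction of) a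
function `f` on `M`, at the point `x` (with `ω = x_q/|x_q|`). -/
noncomputable def DomCRat (v : ℕ → A) (m p : ℕ) (f : (Fin (m + 1) → ℝ) → A)
    (x : Fin (m + 1) → ℝ) : A :=
  DomCR v m p (normq m p x) (sliceFun m p f (normq m p x)) (projP m p x, rad m p x)

/-- `f` is left monogenic on `Ω`: `f ∈ C¹` and `D_x f = 0`. -/
def Monogenic (v : ℕ → A) (m : ℕ) (f : (Fin (m + 1) → ℝ) → A)
    (Ω : Set (Fin (m + 1) → ℝ)) : Prop :=
  ContDiffOn ℝ 1 f Ω ∧ ∀ x ∈ Ω, Dop v m 0 m f x = 0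

/-- `f` is harmonic on `Ω`: `f ∈ C²` and `Δ_x f = 0`. -/
def Harmonic (m : ℕ) (f : (Fin (m + 1) → ℝ) → A)
    (Ω : Set (Fin (m + 1) → ℝ)) : Prop :=
  ContDiffOn ℝ 2 f Ω ∧ ∀ x ∈ Ω, lapF m f x = 0

/-- A family of functions converges normally (locally a summable uniform bound). -/
def NormallyConvOn {E F : Type*} [TopologicalSpace E] [NormedAddCommGroup F]
    (u : ℕ → E → F) (s : Set E) : Prop :=
  ∀ x ∈ s, ∃ U ∈ nhds x, ∃ c : ℕ → ℝ, Summable c ∧ ∀ k : ℕ, ∀ y ∈ U, ‖u k y‖ ≤ c k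

/-- The generalized partial-slice CK-extension
`CK[f₀](x) = Σ_k (r^{2k}/(2k)!)(-Δ_{x_p})^k f₀(x_p)
  + ω Σ_k (r^{2k+1}/(2k+1)!)(-Δ_{x_p})^k (D_{x_p} f₀)(x_p)`. -/
noncomputable def CKe (v : ℕ → A) (m p : ℕ) (f₀ : (Fin (p + 1) → ℝ) → A)
    (x : Fin (m + 1) → ℝ) : A :=
  (∑' k : ℕ, (((-1 : ℝ) ^ k * rad m p x ^ (2 * k)) / (2 * k).factorial) •
      lapIterP p k f₀ (projP m p x)) +
  emb v m (normq m p x) *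
    ∑' k : ℕ, (((-1 : ℝ) ^ k * rad m p x ^ (2 * k + 1)) / (2 * k + 1).factorial) •
      lapIterP p k (DopP v p f₀) (projP m p x)

/-- The coefficient `Γ(q/2)(-1)^k r^{2k} / (2^{2k} k! Γ(k + q/2))`. -/
noncomputable def hgckC (q k : ℕ) (r : ℝ) : ℝ :=
  (Real.Gamma ((q : ℝ) / 2) * (-1) ^ k * r ^ (2 * k)) /
    (2 ^ (2 * k) * (k.factorial : ℝ) * Real.Gamma ((k : ℝ) + (q : ℝ) / 2))

/-- The coefficient `Γ(q/2)(-1)^k r^{2k} / (2^{2k+1} k! Γ(k + q/2 + 1))`. -/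
noncomputable def gckC' (q k : ℕ) (r : ℝ) : ℝ :=
  (Real.Gamma ((q : ℝ) / 2) * (-1) ^ k * r ^ (2 * k)) /
    (2 ^ (2 * k + 1) * (k.factorial : ℝ) * Real.Gamma ((k : ℝ) + (q : ℝ) / 2 + 1))

/-- The coefficient `Γ(q/2 + 1)(-1)^k r^{2k} / (2^{2k} k! Γ(k + q/2 + 1))`. -/
noncomputable def hgckC' (q k : ℕ) (r : ℝ) : ℝ :=
  (Real.Gamma ((q : ℝ) / 2 + 1) * (-1) ^ k * r ^ (2 * k)) /
    (2 ^ (2 * k) * (k.factorial : ℝ) * Real.Gamma ((k : ℝ) + (q : ℝ) / 2 + 1))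

/-- The monogenic generalized CK-extension `GCK[A₀]`. -/
noncomputable def GCKe (v : ℕ → A) (m p : ℕ) (A₀ : (Fin (p + 1) → ℝ) → A)
    (x : Fin (m + 1) → ℝ) : A :=
  (∑' k : ℕ, hgckC (m - p) k (rad m p x) • lapIterP p k A₀ (projP m p x)) +
  emb v m (xqpart m p x) *
    ∑' k : ℕ, gckC' (m - p) k (rad m p x) • lapIterP p k (DopP v p A₀) (projP m p x)

/-- The harmonic generalized CK-extension `HGCK[A₀, A₁]`. -/
noncomputable def HGCKe (v : ℕ → A) (m p : ℕ) (A₀ A₁ : (Fin (p + 1) → ℝ) → A)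
    (x : Fin (m + 1) → ℝ) : A :=
  (∑' k : ℕ, hgckC (m - p) k (rad m p x) • lapIterP p k A₀ (projP m p x)) +
  emb v m (xqpart m p x) *
    ∑' k : ℕ, hgckC' (m - p) k (rad m p x) • lapIterP p k A₁ (projP m p x)

/-- The operator `(1/r)∂_r`, extended to `r = 0` by its limit `∂_r²` (on even
functions). -/
noncomputable def T1 (p : ℕ) (G : (Fin (p + 1) → ℝ) × ℝ → A) :
    (Fin (p + 1) → ℝ) × ℝ → A := fun z =>
  if z.2 = 0 then pdSr2 p G z else (z.2)⁻¹ • pdSr p G z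

/-- The operator `∂_r ∘ (1/r)`, extended to `r = 0` by its limit `(1/2)∂_r²` (on odd
functions). -/
noncomputable def T2 (p : ℕ) (G : (Fin (p + 1) → ℝ) × ℝ → A) :
    (Fin (p + 1) → ℝ) × ℝ → A := fun z =>
  if z.2 = 0 then (2 : ℝ)⁻¹ • pdSr2 p G z
  else fderiv ℝ (fun t : ℝ => t⁻¹ • G (z.1, t)) z.2 1

/-- `C_q(k) = (q-1)(q-3)⋯(q-2k+1)`, `C_q(0) = 1`. -/
noncomputable def cq (q k : ℕ) : ℝ :=
  ∏ i ∈ Finset.range k, ((q : ℝ) - (2 * (i : ℝ) + 1))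

/-- Double factorial. -/
def dfac : ℕ → ℕ
  | 0 => 1
  | 1 => 1
  | n + 2 => (n + 2) * dfac n

/-- The Fueter-Sce constant `γ_q = (-1)^{(q-1)/2} (q-1)!!/(q-2)!!`. -/
noncomputable def gammaQ (q : ℕ) : ℝ :=
  (-1 : ℝ) ^ ((q - 1) / 2) * (dfac (q - 1) : ℝ) / (dfac (q - 2) : ℝ)


section
variable {E : Type*} [NormedAddCommGroup E] [NormedSpace ℝ E]
  {V : Type*} [NormedAddCommGroup V] [NormedSpace ℝ V]

theorem self_eq_neg' {a : E} (h : a = -a) : a = 0 := by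
  have h2 : (2 : ℝ) • a = 0 := by
    rw [two_smul]
    nth_rewrite 2 [h]
    simp
  exact (smul_eq_zero.1 h2).resolve_left two_ne_zero

/-- second order derivative data at a point -/
def HasD2 (φ : ℝ → E) (t₀ : ℝ) (a b : E) : Prop :=
  ∃ φ' : ℝ → E, (∀ᶠ t in 𝓝 t₀, HasDerivAt φ (φ' t) t) ∧ φ' t₀ = a ∧ HasDerivAt φ' b t₀

theorem HasD2.hasDerivAt {φ : ℝ → E} {t₀ : ℝ} {a b : E} (h : HasD2 φ t₀ a b) :
    HasDerivAt φ a t₀ := by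
  obtain ⟨φ', h1, rfl, h3⟩ := h
  exact h1.self_of_nhds

theorem HasD2.unique {φ : ℝ → E} {t₀ : ℝ} {a b a' b' : E} (h : HasD2 φ t₀ a b)
    (h' : HasD2 φ t₀ a' b') : b = b' := by
  obtain ⟨φ', h1, rfl, h3⟩ := h
  obtain ⟨ψ', g1, rfl, g3⟩ := h'
  have : φ' =ᶠ[𝓝 t₀] ψ' := by
    filter_upwards [h1, g1] with t ht gt using ht.unique gt
  exact h3.unique (g3.congr_of_eventuallyEq this)

theorem HasD2.congr {φ ψ : ℝ → E} {t₀ : ℝ} {a b : E} (h : HasD2 φ t₀ a b)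
    (e : ψ =ᶠ[𝓝 t₀] φ) : HasD2 ψ t₀ a b := by
  obtain ⟨φ', h1, h2, h3⟩ := h
  refine ⟨φ', ?_, h2, h3⟩
  filter_upwards [h1, e.eventually_nhds] with t ht et
  exact ht.congr_of_eventuallyEq et

theorem HasD2.add {φ ψ : ℝ → E} {t₀ : ℝ} {a b a' b' : E} (h : HasD2 φ t₀ a b)
    (h' : HasD2 ψ t₀ a' b') : HasD2 (fun t => φ t + ψ t) t₀ (a + a') (b + b') := by
  obtain ⟨φ', h1, rfl, h3⟩ := h
  obtain ⟨ψ', g1, rfl, g3⟩ := h'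
  refine ⟨fun t => φ' t + ψ' t, ?_, rfl, h3.add g3⟩
  filter_upwards [h1, g1] with t ht gt using ht.add gt

theorem HasD2.clm {φ : ℝ → E} {t₀ : ℝ} {a b : E} (L : E →L[ℝ] V) (h : HasD2 φ t₀ a b) :
    HasD2 (fun t => L (φ t)) t₀ (L a) (L b) := by
  obtain ⟨φ', h1, rfl, h3⟩ := h
  refine ⟨fun t => L (φ' t), ?_, rfl, L.hasFDerivAt.comp_hasDerivAt _ h3⟩
  filter_upwards [h1] with t ht using L.hasFDerivAt.comp_hasDerivAt _ ht

theorem HasD2.smul {c : ℝ → ℝ} {φ : ℝ → E} {t₀ : ℝ} {c₁ c₂ : ℝ} {a b : E}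
    (hc : HasD2 c t₀ c₁ c₂) (h : HasD2 φ t₀ a b) :
    HasD2 (fun t => c t • φ t) t₀ (c t₀ • a + c₁ • φ t₀)
      (c t₀ • b + (2 * c₁) • a + c₂ • φ t₀) := by
  obtain ⟨φ', h1, rfl, h3⟩ := h
  obtain ⟨c', g1, rfl, g3⟩ := hc
  refine ⟨fun t => c t • φ' t + c' t • φ t, ?_, rfl, ?_⟩
  · filter_upwards [h1, g1] with t ht gt using gt.smul ht
  · refine ((g1.self_of_nhds.smul h3).add (g3.smul h1.self_of_nhds)).congr_deriv ?_
    module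

theorem HasD2.comp {φ : ℝ → E} {ρ : ℝ → ℝ} {t₀ : ℝ} {ρ₁ ρ₂ : ℝ} {a b : E}
    (h : HasD2 φ (ρ t₀) a b) (hρ : HasD2 ρ t₀ ρ₁ ρ₂) :
    HasD2 (fun t => φ (ρ t)) t₀ (ρ₁ • a) (ρ₁ ^ 2 • b + ρ₂ • a) := by
  obtain ⟨φ', h1, rfl, h3⟩ := h
  obtain ⟨c', g1, rfl, g3⟩ := hρ
  refine ⟨fun t => c' t • φ' (ρ t), ?_, rfl, ?_⟩
  · filter_upwards [g1.self_of_nhds.continuousAt.eventually h1, g1] with t ht gt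
    exact ht.scomp t gt
  · refine (g3.smul (h3.scomp t₀ g1.self_of_nhds)).congr_deriv ?_
    simp only [Function.comp]
    module

theorem hasD2_id (t₀ : ℝ) : HasD2 (fun t : ℝ => t) t₀ 1 0 :=
  ⟨fun _ => 1, Eventually.of_forall fun t => hasDerivAt_id t, rfl, hasDerivAt_const _ _⟩

theorem hasD2_inv {t₀ : ℝ} (h : t₀ ≠ 0) :
    HasD2 (fun t : ℝ => t⁻¹) t₀ (-(t₀ ^ 2)⁻¹) (2 * (t₀ ^ 3)⁻¹) := by
  refine ⟨fun t => -(t ^ 2)⁻¹, ?_, rfl, ?_⟩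
  · filter_upwards [isOpen_ne.mem_nhds h] with t ht using hasDerivAt_inv ht
  · refine (((hasDerivAt_id t₀).pow 2).inv (pow_ne_zero 2 h)).neg.congr_deriv ?_
    simp
    field_simp

/-- `ρ(t) = √(c + 2 b t + t²)` -/
theorem hasD2_sqrt {b c : ℝ} (h : 0 < c) :
    HasD2 (fun t : ℝ => Real.sqrt (c + 2 * b * t + t ^ 2)) 0 (b / √c)
      (1 / √c - b ^ 2 / √c ^ 3) := by
  have hpos : ∀ᶠ t in 𝓝 (0:ℝ), 0 < c + 2 * b * t + t ^ 2 := by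
    have : ContinuousAt (fun t : ℝ => c + 2 * b * t + t ^ 2) 0 := by fun_prop
    exact this.eventually (lt_mem_nhds (by simpa using h))
  have key : ∀ t : ℝ, 0 < c + 2 * b * t + t ^ 2 →
      HasDerivAt (fun t : ℝ => Real.sqrt (c + 2 * b * t + t ^ 2))
        ((b + t) / √(c + 2 * b * t + t ^ 2)) t := by
    intro t ht
    have h1 : HasDerivAt (fun t : ℝ => c + 2 * b * t + t ^ 2) (2 * b + 2 * t) t := by
      refine ((((hasDerivAt_id t).const_mul (2 * b)).const_add c).add
        ((hasDerivAt_id t).pow 2)).congr_deriv ?_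
      simp
    convert h1.sqrt ht.ne' using 1
    field_simp
  refine ⟨fun t => (b + t) / √(c + 2 * b * t + t ^ 2), ?_, by simp, ?_⟩
  · filter_upwards [hpos] with t ht using key t ht
  · have h0 : 0 < √c := Real.sqrt_pos.2 h
    have := ((hasDerivAt_id (0:ℝ)).const_add b).div (key 0 (by simpa using h))
      (by simpa using h0.ne')
    refine this.congr_deriv ?_
    simp
    field_simp

theorem line_aux {g : V → E} {x e : V} {t₀ : ℝ} (hg : ContDiffAt ℝ 2 g (x + t₀ • e)) :
    (∀ᶠ t in 𝓝 t₀, HasDerivAt (fun t : ℝ => g (x + t • e)) (fderiv ℝ g (x + t • e) e) t) ∧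
      HasDerivAt (fun t : ℝ => fderiv ℝ g (x + t • e) e)
      (fderiv ℝ (fun y => fderiv ℝ g y e) (x + t₀ • e) e) t₀ := by
  have hl : ∀ t : ℝ, HasDerivAt (fun t : ℝ => x + t • e) e t := by
    intro t
    simpa using ((hasDerivAt_id t).smul_const e).const_add x
  refine ⟨?_, ?_⟩
  · have h1 : ∀ᶠ y in 𝓝 (x + t₀ • e), ContDiffAt ℝ 2 g y := hg.eventually (by simp)
    filter_upwards [(hl t₀).continuousAt.eventually h1] with t ht
    exact (ht.differentiableAt (by simp)).hasFDerivAt.comp_hasDerivAt t (hl t)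
  · have h2 : DifferentiableAt ℝ (fun y => fderiv ℝ g y e) (x + t₀ • e) :=
      ((hg.fderiv_right (m := 1) (by norm_num)).differentiableAt (by simp)).clm_apply
        (differentiableAt_const e)
    exact HasFDerivAt.comp_hasDerivAt t₀ h2.hasFDerivAt (hl t₀)

theorem hasD2_line {g : V → E} {x e : V} (hg : ContDiffAt ℝ 2 g x) :
    HasD2 (fun t : ℝ => g (x + t • e)) 0 (fderiv ℝ g x e)
      (fderiv ℝ (fun y => fderiv ℝ g y e) x e) := by
  have h0 : x + (0:ℝ) • e = x := by simp
  have := line_aux (g := g) (x := x) (e := e) (t₀ := 0) (by rwa [h0])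
  rw [h0] at this
  exact ⟨_, this.1, by rw [h0], this.2⟩

theorem HasD2.even_first {φ : ℝ → E} {a b : E} (h : HasD2 φ 0 a b)
    (he : ∀ᶠ t in 𝓝 (0:ℝ), φ (-t) = φ t) : a = 0 := by
  have h1 := h.hasDerivAt
  have h2 : HasDerivAt (fun t => φ (-t)) (-a) 0 := by
    have := HasDerivAt.scomp (0:ℝ) (g₁ := φ) (h := fun t : ℝ => -t) (g₁' := a) (by simpa using h1)
      (hasDerivAt_neg' 0)
    exact this.congr_deriv (by simp)
  have h3 := (h1.congr_of_eventuallyEq he).unique h2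
  exact self_eq_neg' h3

theorem HasD2.odd_second {φ : ℝ → E} {a b : E} (h : HasD2 φ 0 a b)
    (he : ∀ᶠ t in 𝓝 (0:ℝ), φ (-t) = -φ t) : b = 0 := by
  have hn : HasD2 (fun t : ℝ => -t) 0 (-1) 0 :=
    ⟨fun _ => -1, Eventually.of_forall fun t => hasDerivAt_neg' t, rfl, hasDerivAt_const _ _⟩
  have h0 : HasD2 φ (-(0:ℝ)) a b := by simpa using h
  have h1 := h0.comp (ρ := fun t : ℝ => -t) hn
  have h2 := (h.clm (-ContinuousLinearMap.id ℝ E)).congr (ψ := fun t => φ (-t)) (by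
    filter_upwards [he] with t ht
    simpa using ht)
  have := h1.unique h2
  simp at this
  exact self_eq_neg' this

theorem HasD2.tendsto_even {φ' : ℝ → E} {b : E} (h0 : φ' 0 = 0) (h : HasDerivAt φ' b 0) :
    Tendsto (fun t : ℝ => t⁻¹ • φ' t) (𝓝[≠] 0) (𝓝 b) := by
  have := hasDerivAt_iff_tendsto_slope.1 h
  refine this.congr fun t => ?_
  simp [slope_def_module, h0]

theorem HasD2.tendsto_odd {φ φ' : ℝ → E} (hφ : ∀ᶠ t in 𝓝 (0:ℝ), HasDerivAt φ (φ' t) t)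
    (h0 : φ 0 = 0) (h : HasDerivAt φ' 0 0) :
    Tendsto (fun r : ℝ => fderiv ℝ (fun t : ℝ => t⁻¹ • φ t) r 1) (𝓝[≠] 0) (𝓝 0) := by
  have e : (fun r : ℝ => r⁻¹ • (φ' r - φ' 0) - (r^2)⁻¹ • (φ r - r • φ' 0)) =ᶠ[𝓝[≠] 0]
      (fun r : ℝ => fderiv ℝ (fun t : ℝ => t⁻¹ • φ t) r 1) := by
    filter_upwards [nhdsWithin_le_nhds hφ, self_mem_nhdsWithin] with r hr hne
    have hne : r ≠ 0 := hne
    have := ((hasDerivAt_inv hne).smul hr)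
    rw [fderiv_apply_one_eq_deriv]
    erw [this.deriv]
    rw [smul_sub, smul_sub, smul_smul]
    have : (r^2)⁻¹ * r = r⁻¹ := by field_simp
    rw [this]
    module
  refine Tendsto.congr' e ?_
  rw [← sub_zero (0:E)]
  refine Tendsto.sub ?_ ?_
  · have := hasDerivAt_iff_tendsto_slope.1 h
    refine this.congr fun t => ?_
    simp [slope_def_module]
  · rw [Metric.tendsto_nhds]
    intro ε hε
    have h3 := (hasDerivAt_iff_isLittleO.1 h).def (half_pos hε)
    obtain ⟨δ, hδ, hball⟩ := Metric.eventually_nhds_iff_ball.1 (hφ.and h3)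
    filter_upwards [nhdsWithin_le_nhds (Metric.ball_mem_nhds (0:ℝ) hδ),
      self_mem_nhdsWithin] with r hr hne
    have hne : r ≠ 0 := hne
    have hb : ‖(φ r - r • φ' 0) - (φ 0 - (0:ℝ) • φ' 0)‖ ≤ (ε / 2 * |r|) * ‖r - 0‖ := by
      refine Convex.norm_image_sub_le_of_norm_hasDerivWithin_le
        (f := fun t => φ t - t • φ' 0) (f' := fun t => φ' t - φ' 0)
        (s := Metric.closedBall 0 |r|) ?_ ?_ (convex_closedBall _ _) (by simp) (by simp)
      · intro t ht
        have ht' : t ∈ Metric.ball (0:ℝ) δ := by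
          simp at ht hr ⊢; linarith
        have := ((hball t ht').1.sub ((hasDerivAt_id t).smul_const (φ' 0)))
        exact (this.congr_deriv (by simp)).hasDerivWithinAt
      · intro t ht
        have ht' : t ∈ Metric.ball (0:ℝ) δ := by
          simp at ht hr ⊢; linarith
        have := (hball t ht').2
        simp at this ht
        refine this.trans ?_
        gcongr
    simp only [h0, zero_smul, sub_zero] at hb
    rw [dist_zero_right, norm_smul, norm_inv, norm_pow]
    have hr0 : 0 < ‖r‖ := norm_pos_iff.2 hne
    calc (‖r‖ ^ 2)⁻¹ * ‖φ r - r • φ' 0‖ ≤ (‖r‖ ^ 2)⁻¹ * ((ε / 2 * |r|) * ‖r‖) := by gcongr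
      _ = ε / 2 := by rw [← Real.norm_eq_abs]; field_simp
      _ < ε := by linarith
end

section
variable {A : Type*} [NormedAddCommGroup A] [NormedSpace ℝ A]

theorem r_aux (p : ℕ) {G : (Fin (p + 1) → ℝ) × ℝ → A} {y : Fin (p + 1) → ℝ} {r : ℝ}
    (hG : ContDiffAt ℝ 2 G (y, r)) :
    (∀ᶠ t in 𝓝 r, HasDerivAt (fun t : ℝ => G (y, t)) (pdSr p G (y, t)) t) ∧
      HasDerivAt (fun t : ℝ => pdSr p G (y, t)) (pdSr2 p G (y, r)) r := by
  have h0 : ∀ t : ℝ, ((y, 0) : (Fin (p + 1) → ℝ) × ℝ) + t • (0, 1) = (y, t) := by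
    intro t; simp
  have := line_aux (g := G) (x := (y, 0)) (e := (0, 1)) (t₀ := r) (by rwa [h0])
  simp only [h0] at this
  exact this

theorem hasD2_r (p : ℕ) {G : (Fin (p + 1) → ℝ) × ℝ → A} {y : Fin (p + 1) → ℝ} {r : ℝ}
    (hG : ContDiffAt ℝ 2 G (y, r)) :
    HasD2 (fun t : ℝ => G (y, t)) r (pdSr p G (y, r)) (pdSr2 p G (y, r)) :=
  ⟨_, (r_aux p hG).1, rfl, (r_aux p hG).2⟩

theorem hasD2_x (p : ℕ) (s : Fin (p + 1)) {G : (Fin (p + 1) → ℝ) × ℝ → A}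
    {y : Fin (p + 1) → ℝ} {r : ℝ} (hG : ContDiffAt ℝ 2 G (y, r)) :
    HasD2 (fun t : ℝ => G (y + t • Pi.single s 1, r)) 0 (pdSx p s G (y, r))
      (pdSx p s (pdSx p s G) (y, r)) := by
  have := hasD2_line (e := ((Pi.single s 1, 0) : (Fin (p + 1) → ℝ) × ℝ)) hG
  have h0 : ∀ t : ℝ, ((y, r) : (Fin (p + 1) → ℝ) × ℝ) + t • (Pi.single s 1, 0) =
      (y + t • Pi.single s 1, r) := by
    intro t; simp
  simp only [h0] at this
  exact this

theorem emb_add (v : ℕ → A) (m : ℕ) (x y : Fin (m + 1) → ℝ) :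
    emb v m (x + y) = emb v m x + emb v m y := by
  simp [emb, add_smul, Finset.sum_add_distrib]

theorem emb_smul (v : ℕ → A) (m : ℕ) (c : ℝ) (x : Fin (m + 1) → ℝ) :
    emb v m (c • x) = c • emb v m x := by
  simp [emb, mul_smul, Finset.smul_sum]

theorem emb_single (v : ℕ → A) (m : ℕ) (s : Fin (m + 1)) :
    emb v m (Pi.single s 1) = v s := by
  simp [emb, Pi.single_apply]

/-- the product as a bilinear map -/
noncomputable def mulB [Mul A] [One A] {conj : A → A} (H : IsAltStarAlg A conj) :
    A →ₗ[ℝ] A →ₗ[ℝ] A :=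
  LinearMap.mk₂ ℝ (fun a b => a * b) H.add_mul' H.smul_mul' H.mul_add' H.mul_smul'

/-- left multiplication as a continuous linear map -/
noncomputable def mulL [Mul A] [One A] {conj : A → A} (H : IsAltStarAlg A conj) (a : A) :
    A →L[ℝ] A :=
  haveI := H.finDim
  LinearMap.toContinuousLinearMap (mulB H a)

theorem mulL_apply [Mul A] [One A] {conj : A → A} (H : IsAltStarAlg A conj) (a b : A) :
    mulL H a b = a * b := by
  simp [mulL, mulB]

theorem mulB_apply [Mul A] [One A] {conj : A → A} (H : IsAltStarAlg A conj) (a b : A) :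
    mulB H a b = a * b := by
  simp [mulB]

theorem emb_sq [Mul A] [One A] {conj : A → A} (H : IsAltStarAlg A conj)
    {v : ℕ → A} {m p : ℕ} (hv : IsHypBasis A conj v m) (w : Fin (m + 1) → ℝ)
    (hw : ∀ s : Fin (m + 1), (s : ℕ) ≤ p → w s = 0) :
    emb v m w * emb v m w = -((∑ s, w s ^ 2) • (1 : A)) := by
  have hsq : ∀ s : ℕ, 1 ≤ s → s ≤ m → v s * v s = -1 := by
    intro s h1 h2
    have h3 := hv.norm_one s h1 h2
    have h4 : conj (v s) = (-1 : ℝ) • v s := by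
      rw [neg_one_smul]; exact eq_neg_of_add_eq_zero_right (hv.trace_zero s h1 h2)
    rw [h4, H.mul_smul', neg_one_smul] at h3
    rw [← h3, neg_neg]
  have hS : emb v m w * emb v m w = ∑ s, ∑ t, (w s * w t) • (v s * v t) := by
    rw [← mulB_apply H]
    simp only [emb, map_sum, LinearMap.sum_apply, map_smul, LinearMap.smul_apply, mulB_apply]
    rw [Finset.sum_comm]
    simp only [smul_smul, Finset.smul_sum]
    refine Finset.sum_congr rfl fun s _ => Finset.sum_congr rfl fun t _ => ?_
    first | rfl | rw [mul_comm]
  have hSS : (2 : ℝ) • (emb v m w * emb v m w) = (2 : ℝ) • (-((∑ s, w s ^ 2) • (1 : A))) := by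
    rw [two_smul]
    nth_rewrite 2 [hS]
    rw [hS]
    nth_rewrite 2 [Finset.sum_comm]
    simp only [← Finset.sum_add_distrib]
    rw [Finset.sum_smul, ← Finset.sum_neg_distrib, Finset.smul_sum]
    refine Finset.sum_congr rfl fun s _ => ?_
    rw [Finset.sum_eq_single s]
    · by_cases hs : (s : ℕ) ≤ p
      · simp [hw s hs]
      · rw [hsq s (by omega) (by omega)]
        module
    · intro t _ hts
      by_cases hs : (s : ℕ) ≤ p
      · simp [hw s hs]
      by_cases ht : (t : ℕ) ≤ p
      · simp [hw t ht]
      rw [hv.anticomm s t (by omega) (by omega) (by omega) (by omega)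
        (fun h => hts (Fin.ext h.symm))]
      module
    · simp
  exact smul_right_injective A (two_ne_zero (α := ℝ)) hSS

theorem mem_Sph [Mul A] [One A] {conj : A → A} (H : IsAltStarAlg A conj)
    {v : ℕ → A} {m p : ℕ} (hv : IsHypBasis A conj v m) (w : Fin (m + 1) → ℝ) :
    w ∈ Sph v m p ↔ (∀ s : Fin (m + 1), (s : ℕ) ≤ p → w s = 0) ∧ ∑ s, w s ^ 2 = 1 := by
  have h1 : (1 : A) ≠ 0 := by
    rw [← hv.v_zero]
    exact hv.indep.ne_zero 0
  constructor
  · rintro ⟨h, h2⟩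
    refine ⟨h, ?_⟩
    rw [emb_sq H hv w h, neg_inj] at h2
    exact smul_left_injective ℝ h1 (by simpa using h2)
  · rintro ⟨h, h2⟩
    refine ⟨h, ?_⟩
    rw [emb_sq H hv w h, h2, one_smul]

end

theorem sum_low {A : Type*} [AddCommMonoid A] {m p : ℕ} (hp : p < m) (g : Fin (p + 1) → A) :
    ∑ s : Fin (m + 1), (if h : (s : ℕ) < p + 1 then g ⟨s, h⟩ else 0) = ∑ s, g s := by
  have h1 := Fin.sum_univ_eq_sum_range
    (fun n => if h : n < p + 1 then g ⟨n, h⟩ else 0) (m + 1)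
  have h2 := Fin.sum_univ_eq_sum_range
    (fun n => if h : n < p + 1 then g ⟨n, h⟩ else 0) (p + 1)
  rw [h1]
  have h3 : ∑ s : Fin (p + 1), g s =
      ∑ s : Fin (p + 1), (if h : (s : ℕ) < p + 1 then g ⟨s, h⟩ else 0) :=
    Finset.sum_congr rfl fun s _ => by rw [dif_pos s.2]
  rw [h3, h2]
  symm
  refine Finset.sum_subset (Finset.range_mono (by omega)) fun n _ hn => ?_
  rw [Finset.mem_range] at hn
  simp [hn]

theorem sum_high {m p : ℕ} (hp : p < m) :
    ∑ s : Fin (m + 1), (if (s : ℕ) < p + 1 then (0 : ℝ) else 1) = ((m - p : ℕ) : ℝ) := by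
  have h1 := sum_low (A := ℝ) hp (fun _ => 1)
  have h2 : ∑ s : Fin (m + 1), ((if (s : ℕ) < p + 1 then (0 : ℝ) else 1) +
      (if h : (s : ℕ) < p + 1 then (1 : ℝ) else 0)) = m + 1 := by
    rw [Finset.sum_congr rfl (g := fun _ => (1 : ℝ)) (fun s _ => by split_ifs <;> simp)]
    simp
  rw [Finset.sum_add_distrib, h1] at h2
  simp only [Finset.sum_const, Finset.card_univ, Fintype.card_fin, nsmul_eq_mul, mul_one,
    Nat.cast_add, Nat.cast_one] at h2
  rw [Nat.cast_sub hp.le]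
  linarith

theorem xqpart_low {m p : ℕ} (x : Fin (m + 1) → ℝ) (s : Fin (m + 1)) (h : (s : ℕ) ≤ p) :
    xqpart m p x s = 0 := by simp [xqpart, h]

theorem rad_sq (m p : ℕ) (x : Fin (m + 1) → ℝ) :
    rad m p x ^ 2 = ∑ s, (xqpart m p x s) ^ 2 :=
  Real.sq_sqrt (Finset.sum_nonneg fun _ _ => sq_nonneg _)

theorem xqpart_of_rad {m p : ℕ} {x : Fin (m + 1) → ℝ} (h : rad m p x = 0) :
    xqpart m p x = 0 := by
  have := rad_sq m p x
  rw [h] at this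
  have h2 := (Finset.sum_eq_zero_iff_of_nonneg (fun i _ => sq_nonneg (xqpart m p x i))).1
    (by rw [← this]; norm_num)
  funext s
  simpa using h2 s (Finset.mem_univ s)

theorem inj_add_xq {m p : ℕ} (x : Fin (m + 1) → ℝ) :
    injP m p (projP m p x) + xqpart m p x = x := by
  funext s
  by_cases h : (s : ℕ) ≤ p
  · have h' : (s : ℕ) < p + 1 := by omega
    have h2 : (s : ℕ) < m + 1 := s.2
    simp only [injP, projP, xqpart, h, h', h2, Pi.add_apply, dif_pos, if_true, add_zero]
  · have h' : ¬ (s : ℕ) < p + 1 := by omega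
    simp [injP, xqpart, h, h']

theorem projP_pt {m p : ℕ} (hp : p < m) (w : Fin (m + 1) → ℝ)
    (hw : ∀ s : Fin (m + 1), (s : ℕ) ≤ p → w s = 0) (y : Fin (p + 1) → ℝ) (r : ℝ) :
    projP m p (pt m p w y r) = y := by
  funext s
  have h1 : (s : ℕ) < m + 1 := by omega
  have h2 : (s : ℕ) ≤ p := by omega
  have h3 : (s : ℕ) < p + 1 := s.2
  simp only [projP, pt, injP, h1, h3, dif_pos, Pi.add_apply, Pi.smul_apply, hw ⟨s, h1⟩ h2, smul_zero, add_zero]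

theorem xqpart_pt {m p : ℕ} (w : Fin (m + 1) → ℝ)
    (hw : ∀ s : Fin (m + 1), (s : ℕ) ≤ p → w s = 0) (y : Fin (p + 1) → ℝ) (r : ℝ) :
    xqpart m p (pt m p w y r) = r • w := by
  funext s
  by_cases h : (s : ℕ) ≤ p
  · simp [xqpart, h, hw s h]
  · have h' : ¬ (s : ℕ) < p + 1 := by omega
    simp [xqpart, h, pt, injP, h']

theorem rad_pt {m p : ℕ} (w : Fin (m + 1) → ℝ)
    (hw : ∀ s : Fin (m + 1), (s : ℕ) ≤ p → w s = 0) (hw1 : ∑ s, w s ^ 2 = 1)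
    (y : Fin (p + 1) → ℝ) (r : ℝ) :
    rad m p (pt m p w y r) = |r| := by
  simp only [rad, xqpart_pt w hw, Pi.smul_apply, smul_eq_mul, mul_pow, ← Finset.mul_sum, hw1,
    mul_one, Real.sqrt_sq_eq_abs]

theorem single_sphere {m p : ℕ} (s : Fin (m + 1)) (hs : p < (s : ℕ)) :
    (∀ k : Fin (m + 1), (k : ℕ) ≤ p → (Pi.single s (1:ℝ) : Fin (m + 1) → ℝ) k = 0) ∧
      ∑ k, (Pi.single s (1:ℝ) : Fin (m + 1) → ℝ) k ^ 2 = 1 := by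
  constructor
  · intro k hk
    have : k ≠ s := by rintro rfl; omega
    simp [this]
  · rw [Finset.sum_eq_single s]
    · simp
    · intro b _ hb; simp [hb]
    · simp

theorem normq_sphere {m p : ℕ} {x : Fin (m + 1) → ℝ} (h : rad m p x ≠ 0) :
    (∀ k : Fin (m + 1), (k : ℕ) ≤ p → normq m p x k = 0) ∧
      ∑ k, normq m p x k ^ 2 = 1 := by
  constructor
  · intro k hk
    simp [normq, xqpart_low x k hk]
  · simp only [normq, Pi.smul_apply, smul_eq_mul, mul_pow, ← Finset.mul_sum, ← rad_sq]
    field_simp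

theorem pt_normq {m p : ℕ} {x : Fin (m + 1) → ℝ} (h : rad m p x ≠ 0) :
    pt m p (normq m p x) (projP m p x) (rad m p x) = x := by
  rw [pt, normq, smul_smul, mul_inv_cancel₀ h, one_smul, inj_add_xq]

theorem pt_rad_zero {m p : ℕ} {x : Fin (m + 1) → ℝ} (h : rad m p x = 0) (w) :
    pt m p w (projP m p x) 0 = x := by
  have := inj_add_xq (p := p) x
  rw [xqpart_of_rad h] at this
  rw [pt, zero_smul, this]

theorem mem_OmegaD {A : Type*} [NormedAddCommGroup A] [NormedSpace ℝ A] [Mul A] [One A]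
    {conj : A → A} (H : IsAltStarAlg A conj)
    {v : ℕ → A} {m p : ℕ} (hv : IsHypBasis A conj v m) (hp : p < m)
    {D : Set ((Fin (p + 1) → ℝ) × ℝ)} (hDrefl : ∀ z ∈ D, reflD p z ∈ D)
    (x : Fin (m + 1) → ℝ) :
    x ∈ OmegaD v m p D ↔ (projP m p x, rad m p x) ∈ D := by
  constructor
  · rintro ⟨w, hw, z, hz, rfl⟩
    rw [mem_Sph H hv] at hw
    rw [projP_pt hp w hw.1, rad_pt w hw.1 hw.2]
    rcases abs_choice z.2 with h | h
    · rw [h]; exact hz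
    · rw [h]; exact hDrefl z hz
  · intro hx
    by_cases h : rad m p x = 0
    · refine ⟨Pi.single (Fin.last m) 1, ?_, _, hx, ?_⟩
      · rw [mem_Sph H hv]
        exact single_sphere _ (by simpa using hp)
      · dsimp only
        rw [h, pt_rad_zero h]
    · exact ⟨_, (mem_Sph H hv _).2 (normq_sphere h), _, hx, (pt_normq h).symm⟩

theorem cont_projrad (m p : ℕ) : Continuous fun x : Fin (m + 1) → ℝ =>
    ((projP m p x, rad m p x) : (Fin (p + 1) → ℝ) × ℝ) := by
  refine Continuous.prodMk ?_ ?_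
  · refine continuous_pi fun s => ?_
    unfold projP
    split_ifs <;> fun_prop
  · unfold rad xqpart
    refine Continuous.sqrt (continuous_finsetSum _ fun s _ => ?_)
    split_ifs <;> fun_prop

theorem low_line {m p : ℕ} (x : Fin (m + 1) → ℝ) (s : Fin (m + 1))
    (h : (s : ℕ) < p + 1) (t : ℝ) :
    projP m p (x + t • Pi.single s 1) = projP m p x + t • Pi.single ⟨s, h⟩ 1 ∧
    xqpart m p (x + t • Pi.single s 1) = xqpart m p x := by
  constructor
  · funext k
    simp only [projP]
    by_cases e : k = ⟨s, h⟩
    · subst e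
      have h2 : (s : ℕ) < m + 1 := s.2
      simp only [projP, h2, dif_pos, Pi.add_apply, Pi.smul_apply, Pi.single_eq_same]
    · have e' : ∀ hh, (⟨k, hh⟩ : Fin (m + 1)) ≠ s := fun hh h' => e (by
        subst h'; rfl)
      simp [projP, e, e']
  · funext k
    by_cases hk : (k : ℕ) ≤ p
    · simp [xqpart, hk]
    · have : k ≠ s := by rintro rfl; omega
      simp [xqpart, hk, this]

theorem high_line {m p : ℕ} (x : Fin (m + 1) → ℝ) (s : Fin (m + 1))
    (h : ¬ (s : ℕ) < p + 1) (t : ℝ) :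
    projP m p (x + t • Pi.single s 1) = projP m p x ∧
    xqpart m p (x + t • Pi.single s 1) = xqpart m p x + t • Pi.single s 1 := by
  constructor
  · funext k
    simp only [projP]
    have e' : ∀ hh, (⟨k, hh⟩ : Fin (m + 1)) ≠ s := by
      rintro hh rfl
      simp at h
      omega
    simp [e']
  · funext k
    by_cases hk : (k : ℕ) ≤ p
    · have : k ≠ s := by rintro rfl; omega
      simp [xqpart, hk, this]
    · simp [xqpart, hk]

theorem rad_high {m p : ℕ} (x : Fin (m + 1) → ℝ) (s : Fin (m + 1))
    (h : ¬ (s : ℕ) < p + 1) (t : ℝ) :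
    rad m p (x + t • Pi.single s 1) =
      √((∑ k, xqpart m p x k ^ 2) + 2 * xqpart m p x s * t + t ^ 2) := by
  rw [rad, (high_line x s h t).2]
  congr 1
  have : ∀ k, (xqpart m p x + t • Pi.single s (1:ℝ) : Fin (m + 1) → ℝ) k ^ 2 = xqpart m p x k ^ 2 +
      (if k = s then 2 * xqpart m p x s * t + t ^ 2 else 0) := by
    intro k
    by_cases e : k = s
    · subst e; simp; ring
    · simp [e]
  simp only [this, Finset.sum_add_distrib]
  simp
  ring

/-- For `f = F₁ + ωF₂ ∈ GS²(Ω_D) ∩ C²(Ω_D, 𝔸)`: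
`Δ_x f = Δ_{x'}F₁ + ω Δ_{x'}F₂ + (q-1)((1/r)∂_r F₁ + ω ∂_r(F₂/r))`,
where at `r = 0` the quantities `(1/r)∂_r F₁` and `∂_r(F₂/r)` are the limits as
`r → 0`, which exist and equal `∂_r²F₁(x_p,0)` and `(1/2)∂_r²F₂(x_p,0)`. -/
theorem laplacian_of_slice_function
    {A : Type*} [NormedAddCommGroup A] [NormedSpace ℝ A] [Mul A] [One A]
    (conj : A → A) (H : IsAltStarAlg A conj)
    (v : ℕ → A) (m p : ℕ) (hv : IsHypBasis A conj v m) (hp : p < m)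
    (D : Set ((Fin (p + 1) → ℝ) × ℝ)) (hD : IsOpen D)
    (hDrefl : ∀ z ∈ D, reflD p z ∈ D)
    (F₁ F₂ : (Fin (p + 1) → ℝ) × ℝ → A) (hstem : IsStem p D F₁ F₂)
    (hF₁ : ContDiffOn ℝ 2 F₁ D) (hF₂ : ContDiffOn ℝ 2 F₂ D)
    (f : (Fin (m + 1) → ℝ) → A) (hind : Induced v m p D F₁ F₂ f)
    (hf : ContDiffOn ℝ 2 f (OmegaD v m p D)) :
    -- the limits defining `(1/r)∂_r F₁` and `∂_r(F₂/r)` at `r = 0` exist and have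
    -- the stated values:
    (∀ y : Fin (p + 1) → ℝ, (y, (0 : ℝ)) ∈ D →
      Filter.Tendsto (fun r : ℝ => r⁻¹ • pdSr p F₁ (y, r)) (nhdsWithin 0 {(0 : ℝ)}ᶜ)
        (nhds (pdSr2 p F₁ (y, 0))) ∧
      Filter.Tendsto (fun r : ℝ => fderiv ℝ (fun t : ℝ => t⁻¹ • F₂ (y, t)) r 1)
        (nhdsWithin 0 {(0 : ℝ)}ᶜ)
        (nhds ((2 : ℝ)⁻¹ • pdSr2 p F₂ (y, 0)))) ∧
    -- the formula for the Laplacian, valid on all of `Ω_D`: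
    (∀ x ∈ OmegaD v m p D,
      lapF m f x =
        lapSx p F₁ (projP m p x, rad m p x) +
        emb v m (normq m p x) * lapSx p F₂ (projP m p x, rad m p x) +
        (((m - p : ℕ) : ℝ) - 1) •
          (T1 p F₁ (projP m p x, rad m p x) +
            emb v m (normq m p x) * T2 p F₂ (projP m p x, rad m p x))) := by
  have hF₁' : ∀ z ∈ D, ContDiffAt ℝ 2 F₁ z := fun z hz => hF₁.contDiffAt (hD.mem_nhds hz)
  have hF₂' : ∀ z ∈ D, ContDiffAt ℝ 2 F₂ z := fun z hz => hF₂.contDiffAt (hD.mem_nhds hz)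
  have hDr : ∀ (y : Fin (p + 1) → ℝ) (r : ℝ), (y, r) ∈ D → ∀ᶠ t in 𝓝 r, (y, t) ∈ D := by
    intro y r hy
    have hc : ContinuousAt (fun t : ℝ => (y, t)) r := by fun_prop
    exact hc.eventually (hD.mem_nhds hy)
  have hodd : ∀ y : Fin (p + 1) → ℝ, (y, (0 : ℝ)) ∈ D → pdSr2 p F₂ (y, 0) = 0 := by
    intro y hy
    refine (hasD2_r p (hF₂' _ hy)).odd_second ?_
    filter_upwards [hDr y 0 hy] with t ht using (hstem _ ht).2
  have hzero : ∀ y : Fin (p + 1) → ℝ, (y, (0 : ℝ)) ∈ D → F₂ (y, 0) = 0 := by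
    intro y hy
    have := (hstem _ hy).2
    rw [reflD] at this
    simp only [neg_zero] at this
    exact self_eq_neg' this
  have hmul0 : ∀ a : A, a * 0 = 0 := fun a => by rw [← mulL_apply H, map_zero]
  have hzmul : ∀ a : A, (0 : A) * a = 0 := fun a => by
    rw [← mulB_apply H, map_zero, LinearMap.zero_apply]
  refine ⟨fun y hy => ⟨?_, ?_⟩, fun x hx => ?_⟩
  · refine HasD2.tendsto_even ?_ (r_aux p (hF₁' _ hy)).2
    refine (hasD2_r p (hF₁' _ hy)).even_first ?_
    filter_upwards [hDr y 0 hy] with t ht using (hstem _ ht).1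
  · have h := r_aux p (hF₂' _ hy)
    rw [hodd y hy] at h ⊢
    rw [smul_zero]
    exact HasD2.tendsto_odd h.1 (hzero y hy) h.2
  have hopen : IsOpen (OmegaD v m p D) := by
    have : OmegaD v m p D = (fun x => (projP m p x, rad m p x)) ⁻¹' D := by
      ext x
      exact mem_OmegaD H hv hp hDrefl x
    rw [this]
    exact hD.preimage (cont_projrad m p)
  have hform : ∀ x ∈ OmegaD v m p D, f x = F₁ (projP m p x, rad m p x) +
      emb v m (normq m p x) * F₂ (projP m p x, rad m p x) := by
    intro x hx
    have hxD := (mem_OmegaD H hv hp hDrefl x).1 hx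
    by_cases h : rad m p x = 0
    · have hw : (Pi.single (Fin.last m) 1 : Fin (m + 1) → ℝ) ∈ Sph v m p :=
        (mem_Sph H hv _).2 (single_sphere _ (by simpa using hp))
      have := hind _ hw _ hxD
      dsimp only at this
      rw [h] at this hxD ⊢
      rw [pt_rad_zero h, hzero _ hxD, hmul0] at this
      rw [this, hzero _ hxD, hmul0]
    · have := hind _ ((mem_Sph H hv _).2 (normq_sphere h)) _ hxD
      dsimp only at this
      rwa [pt_normq h] at this
  have hfx : ContDiffAt ℝ 2 f x := hf.contDiffAt (hopen.mem_nhds hx)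
  have hxD := (mem_OmegaD H hv hp hDrefl x).1 hx
  have hlineΩ : ∀ s : Fin (m + 1), ∀ᶠ t in 𝓝 (0 : ℝ),
      x + t • (Pi.single s 1 : Fin (m + 1) → ℝ) ∈ OmegaD v m p D := by
    intro s
    have hc : ContinuousAt (fun t : ℝ => x + t • (Pi.single s 1 : Fin (m + 1) → ℝ)) 0 := by
      fun_prop
    exact hc.eventually (hopen.mem_nhds (by simpa using hx))
  have hD2f : ∀ s : Fin (m + 1), HasD2 (fun t : ℝ => f (x + t • Pi.single s 1)) 0
      (pdF m s f x) (pdF m s (pdF m s f) x) := fun s => hasD2_line hfx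
  -- low coordinates
  have hlow : ∀ (s : Fin (m + 1)) (h : (s : ℕ) < p + 1), pdF m s (pdF m s f) x =
      pdSx p ⟨s, h⟩ (pdSx p ⟨s, h⟩ F₁) (projP m p x, rad m p x) +
      emb v m (normq m p x) *
        pdSx p ⟨s, h⟩ (pdSx p ⟨s, h⟩ F₂) (projP m p x, rad m p x) := by
    intro s h
    have h1 := (hasD2_x p ⟨s, h⟩ (hF₁' _ hxD)).add
      ((hasD2_x p ⟨s, h⟩ (hF₂' _ hxD)).clm (mulL H (emb v m (normq m p x))))
    have h2 := h1.congr (ψ := fun t : ℝ => f (x + t • Pi.single s 1)) (by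
      filter_upwards [hlineΩ s] with t ht
      have hr : rad m p (x + t • Pi.single s 1) = rad m p x := by
        rw [rad, (low_line x s h t).2, rad]
      rw [hform _ ht, normq, hr, (low_line x s h t).1, (low_line x s h t).2, mulL_apply]
      rfl)
    rw [(hD2f s).unique h2, mulL_apply]
  set y := projP m p x with hy
  set r := rad m p x with hr
  set ω := emb v m (normq m p x) with hω
  set P : Fin (p + 1) → A := fun s => pdSx p s (pdSx p s F₁) (y, r) +
    ω * pdSx p s (pdSx p s F₂) (y, r) with hP
  have hsumP : ∑ s : Fin (m + 1), (if h : (s : ℕ) < p + 1 then P ⟨s, h⟩ else 0) =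
      (∑ s, pdSx p s (pdSx p s F₁) (y, r)) + ω * ∑ s, pdSx p s (pdSx p s F₂) (y, r) := by
    rw [sum_low hp, hP, Finset.sum_add_distrib]
    congr 1
    rw [← mulL_apply H, map_sum]
    simp only [mulL_apply]
  by_cases h0 : r = 0
  · -- points with `x_q = 0`
    have hω0 : ω = 0 := by
      have : normq m p x = (0 : ℝ) • xqpart m p x := by
        rw [normq, ← hr, h0, inv_zero]
      rw [hω, this, emb_smul, zero_smul]
    have hterm : ∀ s : Fin (m + 1), pdF m s (pdF m s f) x =
        (if h : (s : ℕ) < p + 1 then P ⟨s, h⟩ else 0) +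
        (if (s : ℕ) < p + 1 then (0 : ℝ) else 1) • pdSr2 p F₁ (y, 0) := by
      intro s
      by_cases h : (s : ℕ) < p + 1
      · rw [hlow s h, dif_pos h, if_pos h, zero_smul, add_zero]
      · rw [dif_neg h, if_neg h, zero_add, one_smul]
        have hxD' := hxD
        rw [h0] at hxD'
        have h1 := (hasD2_r p (hF₁' _ hxD')).add
          ((hasD2_r p (hF₂' _ hxD')).clm (mulL H (v s)))
        have h2 := h1.congr (ψ := fun t : ℝ => f (x + t • Pi.single s 1)) (by
          filter_upwards [hDr _ _ hxD'] with t ht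
          have hw : (Pi.single s 1 : Fin (m + 1) → ℝ) ∈ Sph v m p :=
            (mem_Sph H hv _).2 (single_sphere _ (by omega))
          have h3 := hind _ hw _ ht
          have h4 : pt m p (Pi.single s 1) y t = x + t • Pi.single s 1 := by
            have h5 := pt_rad_zero (x := x) (p := p) h0 (Pi.single s 1)
            rw [pt, zero_smul, add_zero] at h5
            rw [pt, hy, h5]
          dsimp only at h3
          rw [h4, emb_single] at h3
          rw [h3, mulL_apply])
        rw [(hD2f s).unique h2, hodd _ hxD', map_zero, add_zero]
    have hsum : lapF m f x = (∑ s, pdSx p s (pdSx p s F₁) (y, r)) +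
        ω * ∑ s, pdSx p s (pdSx p s F₂) (y, r) +
        ((m - p : ℕ) : ℝ) • pdSr2 p F₁ (y, 0) := by
      rw [lapF, Finset.sum_congr rfl fun s _ => hterm s, Finset.sum_add_distrib, hsumP,
        ← Finset.sum_smul, sum_high hp]
    rw [hsum, hω0]
    simp only [hzmul, add_zero, lapSx, T1, h0, if_true]
    module
  · -- points with `x_q ≠ 0`
    have hxq : emb v m (xqpart m p x) = r • ω := by
      rw [hω, normq, emb_smul, smul_smul, ← hr, mul_inv_cancel₀ h0, one_smul]
    set X := emb v m (xqpart m p x) with hX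
    have hc : 0 < ∑ k, xqpart m p x k ^ 2 := by
      rw [← rad_sq]; positivity
    have hG₁ := hasD2_r p (hF₁' _ hxD)
    have hG₂ := (hasD2_inv h0).smul (hasD2_r p (hF₂' _ hxD))
    obtain ⟨b₁, hb₁⟩ : ∃ b, b = r⁻¹ • pdSr p F₂ (y, r) + (-(r ^ 2)⁻¹) • F₂ (y, r) := ⟨_, rfl⟩
    obtain ⟨b₂, hb₂⟩ : ∃ b, b = r⁻¹ • pdSr2 p F₂ (y, r) +
      (2 * -(r ^ 2)⁻¹) • pdSr p F₂ (y, r) + (2 * (r ^ 3)⁻¹) • F₂ (y, r) := ⟨_, rfl⟩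
    have hG₂ : HasD2 (fun t : ℝ => t⁻¹ • F₂ (y, t)) r b₁ b₂ := by
      rw [hb₁, hb₂]; exact hG₂
    have hT2 : T2 p F₂ (y, r) = b₁ := by
      simp only [T2, h0, if_false]
      rw [fderiv_apply_one_eq_deriv]
      exact hG₂.hasDerivAt.deriv
    have hT1 : T1 p F₁ (y, r) = r⁻¹ • pdSr p F₁ (y, r) := by
      simp only [T1, h0, if_false]
    have hc₂ : pdSr2 p F₂ (y, r) = r • b₂ + (2 : ℝ) • b₁ := by
      rw [hb₁, hb₂]
      match_scalars <;> field_simp <;> ring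
    obtain ⟨a₁, ha₁⟩ : ∃ a, a = pdSr p F₁ (y, r) := ⟨_, rfl⟩
    obtain ⟨a₂, ha₂⟩ : ∃ a, a = pdSr2 p F₁ (y, r) := ⟨_, rfl⟩
    rw [← ha₁, ← ha₂] at hG₁
    have hterm : ∀ s : Fin (m + 1), pdF m s (pdF m s f) x =
        (if h : (s : ℕ) < p + 1 then P ⟨s, h⟩ else 0) +
        (if (s : ℕ) < p + 1 then (0 : ℝ) else 1) • (r⁻¹ • (a₁ + X * b₁)) +
        (xqpart m p x s ^ 2) • ((r ^ 2)⁻¹ • (a₂ + X * b₂) - (r ^ 3)⁻¹ • (a₁ + X * b₁)) +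
        mulB H (xqpart m p x s • v s) ((2 * r⁻¹) • b₁) := by
      intro s
      by_cases h : (s : ℕ) < p + 1
      · rw [hlow s h, dif_pos h, if_pos h, xqpart_low x s (by omega)]
        simp [hP]
      · rw [dif_neg h, if_neg h]
        have hρ : HasD2 (fun t : ℝ => rad m p (x + t • Pi.single s 1)) 0
            (xqpart m p x s / r) (1 / r - xqpart m p x s ^ 2 / r ^ 3) := by
          simp only [rad_high x s h]
          exact hasD2_sqrt hc
        have hρ0 : rad m p (x + (0 : ℝ) • Pi.single s 1) = r := by simp [hr]
        have e₁ := HasD2.comp (φ := fun t : ℝ => F₁ (y, t))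
          (ρ := fun t : ℝ => rad m p (x + t • Pi.single s 1)) (by rw [hρ0]; exact hG₁) hρ
        have e₂ := HasD2.comp (φ := fun t : ℝ => t⁻¹ • F₂ (y, t))
          (ρ := fun t : ℝ => rad m p (x + t • Pi.single s 1)) (by rw [hρ0]; exact hG₂) hρ
        have e₃ := (e₁.add (e₂.clm (mulL H X))).add ((hasD2_id 0).smul (e₂.clm (mulL H (v s))))
        have e₄ := e₃.congr (ψ := fun t : ℝ => f (x + t • Pi.single s 1)) (by
          filter_upwards [hlineΩ s] with t ht
          rw [hform _ ht, normq, emb_smul, (high_line x s h t).1, (high_line x s h t).2,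
            emb_add, emb_smul, emb_single, H.smul_mul', H.add_mul', H.smul_mul']
          simp only [map_smul, mulL_apply]
          module)
        rw [(hD2f s).unique e₄]
        simp only [map_smul, map_add, LinearMap.smul_apply, mulL_apply, mulB_apply]
        match_scalars <;> field_simp <;> ring
    have hsum : lapF m f x = (∑ s, pdSx p s (pdSx p s F₁) (y, r)) +
        ω * ∑ s, pdSx p s (pdSx p s F₂) (y, r) +
        ((m - p : ℕ) : ℝ) • (r⁻¹ • (a₁ + X * b₁)) +
        (r ^ 2) • ((r ^ 2)⁻¹ • (a₂ + X * b₂) - (r ^ 3)⁻¹ • (a₁ + X * b₁)) +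
        mulB H X ((2 * r⁻¹) • b₁) := by
      rw [lapF, Finset.sum_congr rfl fun s _ => hterm s, Finset.sum_add_distrib,
        Finset.sum_add_distrib, Finset.sum_add_distrib, hsumP,
        ← Finset.sum_smul, ← Finset.sum_smul, sum_high hp, ← rad_sq, hX, emb, map_sum,
        LinearMap.sum_apply]
    rw [hsum, hT1, hT2, lapSx, lapSx, hc₂, hxq, ← ha₁, ← ha₂]
    simp only [← mulB_apply H, map_smul, map_add, LinearMap.smul_apply]
    match_scalars <;> field_simp <;> ring

end GPSM
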